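/- Lemma 1 (channel resolvability for superposition random codebooks): If R1 > I(U1;Z|S,U), R2 > I(U2;Z|S,U), and R1 + R2 > I(U1,U2;Z|S,U), then for every choice of pmfs Pbar_n on {1,...,2^{nR0}}, the expectation over the random codebooks of the sum over l of Pbar_n(l) times D( P^n_{ZS|U(l),C1,C2} || P^n_{ZS|U}(.|U(l)) ) converges to 0 exponentially fast as n tends to infinity. -/

import Mathlib

/-!
By Jensen's inequality, applied conditionally on the transmitted pair of codewords and on the
output, the expected divergence is at most the mean of `log (1 + ∑ ratio / size)`. The three terms
of the sum come from the index pairs that share the first, the second or both satellite indices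
with the transmitted pair; `ratio` is the likelihood ratio of the output given the shared codewords,
and `size` the number of ways to choose them.

Since `log (1 + ∑ x) ≤ α⁻¹ ∑ x ^ α` for `0 < α ≤ 1`, it remains to bound the moments of order `α`
of the likelihood ratios, and these are products over the letters. The derivative at `α = 0` of a
single-letter moment is a conditional mutual information, which is smaller than the corresponding
rate, so for small `α` all three terms decay exponentially in the blocklength.
-/

open scoped BigOperators

noncomputable section

namespace Paper

/-- `p` is a probability mass function on the finite type `α`. -/
def IsPmf {α : Type*} [Fintype α] (p : α → ℝ) : Prop :=
  (∀ a, 0 ≤ p a) ∧ ∑ a, p a = 1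

/-- `k` is a conditional pmf (a channel / stochastic kernel). -/
def IsKernel {α β : Type*} [Fintype β] (k : α → β → ℝ) : Prop :=
  ∀ a, IsPmf (k a)

/-- Shannon entropy (base 2) of a mass function on a finite type. -/
def ent {α : Type*} [Fintype α] (p : α → ℝ) : ℝ :=
  -∑ a, p a * Real.logb 2 (p a)

/-- Law (pushforward) of the random variable `X` under the mass function `p`. -/
def law {Ω α : Type*} [Fintype Ω] [DecidableEq α] (p : Ω → ℝ) (X : Ω → α) :
    α → ℝ := fun a => ∑ ω, if X ω = a then p ω else 0

/-- Entropy `H(X)` of a random variable `X`. -/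
def H {Ω α : Type*} [Fintype Ω] [Fintype α] [DecidableEq α] (p : Ω → ℝ)
    (X : Ω → α) : ℝ := ent (law p X)

/-- Conditional entropy `H(X|Y)`. -/
def Hc {Ω α β : Type*} [Fintype Ω] [Fintype α] [Fintype β] [DecidableEq α]
    [DecidableEq β] (p : Ω → ℝ) (X : Ω → α) (Y : Ω → β) : ℝ :=
  H p (fun ω => (X ω, Y ω)) - H p Y

/-- Mutual information `I(X;Y)`. -/
def MI {Ω α β : Type*} [Fintype Ω] [Fintype α] [Fintype β] [DecidableEq α]
    [DecidableEq β] (p : Ω → ℝ) (X : Ω → α) (Y : Ω → β) : ℝ :=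
  H p X + H p Y - H p (fun ω => (X ω, Y ω))

/-- Conditional mutual information `I(X;Y|Z)`. -/
def cMI {Ω α β γ : Type*} [Fintype Ω] [Fintype α] [Fintype β] [Fintype γ]
    [DecidableEq α] [DecidableEq β] [DecidableEq γ] (p : Ω → ℝ) (X : Ω → α)
    (Y : Ω → β) (Z : Ω → γ) : ℝ :=
  Hc p X Z - Hc p X (fun ω => (Y ω, Z ω))

/-- Kullback–Leibler divergence (base 2). -/
def KL {α : Type*} [Fintype α] (p q : α → ℝ) : ℝ :=
  ∑ a, p a * Real.logb 2 (p a / q a)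

/-- Binary entropy function. -/
def hb (x : ℝ) : ℝ := -(x * Real.logb 2 x) - (1 - x) * Real.logb 2 (1 - x)

/-- A (message-indexed) encoder is causal: its `j`-th output symbol depends only on the
first `j` state symbols. -/
def Causal {M A B : Type*} {n : ℕ} (e : M → (Fin n → A) → Fin n → B) : Prop :=
  ∀ m s s' j, (∀ i, i ≤ j → s i = s' i) → e m s j = e m s' j

/-- A strictly causal encoder: its `j`-th output symbol depends only on the state symbols
strictly before `j`. -/
def StrictlyCausal {M A B : Type*} {n : ℕ} (e : M → (Fin n → A) → Fin n → B) : Prop :=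
  ∀ m s s' j, (∀ i, i < j → s i = s' i) → e m s j = e m s' j

/-- Sample space carrying the single-letter random variables `(U,U1,U2,S,Z)`. -/
abbrev O5Z (U U1 U2 AS AZ : Type) : Type := U × U1 × U2 × AS × AZ

namespace O5Z
variable {U U1 U2 AS AZ : Type}
def u (ω : O5Z U U1 U2 AS AZ) : U := ω.1
def u1 (ω : O5Z U U1 U2 AS AZ) : U1 := ω.2.1
def u2 (ω : O5Z U U1 U2 AS AZ) : U2 := ω.2.2.1
def s (ω : O5Z U U1 U2 AS AZ) : AS := ω.2.2.2.1
def z (ω : O5Z U U1 U2 AS AZ) : AZ := ω.2.2.2.2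
end O5Z

variable {U U1 U2 AS AZ : Type} [Fintype U] [Fintype U1] [Fintype U2] [Fintype AS]
  [Fintype AZ] [DecidableEq U] [DecidableEq U1] [DecidableEq U2] [DecidableEq AS]
  [DecidableEq AZ]

/-- The single-letter joint law `P_S P_U P_{U1|U} P_{U2|U} P_{Z|UU1U2S}`. -/
def slJointZ (PU : U → ℝ) (PU1 : U → U1 → ℝ) (PU2 : U → U2 → ℝ) (PS : AS → ℝ)
    (PZ : U → U1 → U2 → AS → AZ → ℝ) : O5Z U U1 U2 AS AZ → ℝ :=
  fun ω => PS ω.s * PU ω.u * PU1 ω.u ω.u1 * PU2 ω.u ω.u2 * PZ ω.u ω.u1 ω.u2 ω.s ω.z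

/-- The probability of drawing the superposition codebook realization `(c, c1, c2)`:
cloud centers i.i.d. `P_U^n`, satellites i.i.d. `P_{U1|U}^n` resp. `P_{U2|U}^n`. -/
def cbProb (PU : U → ℝ) (PU1 : U → U1 → ℝ) (PU2 : U → U2 → ℝ) {m0 m1 m2 n : ℕ}
    (c : Fin m0 → Fin n → U) (c1 : Fin m0 → Fin m1 → Fin n → U1)
    (c2 : Fin m0 → Fin m2 → Fin n → U2) : ℝ :=
  (∏ l, ∏ i, PU (c l i)) * (∏ l, ∏ l1, ∏ i, PU1 (c l i) (c1 l l1 i)) *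
    ∏ l, ∏ l2, ∏ i, PU2 (c l i) (c2 l l2 i)

/-- The output-plus-state distribution `P^n_{ZS|U(l),C1,C2}` induced by a codebook
realization and the cloud index `l` (uniform satellite indices). -/
def inducedZS (PS : AS → ℝ) (PZ : U → U1 → U2 → AS → AZ → ℝ) {m0 m1 m2 n : ℕ}
    (c : Fin m0 → Fin n → U) (c1 : Fin m0 → Fin m1 → Fin n → U1)
    (c2 : Fin m0 → Fin m2 → Fin n → U2) (l : Fin m0) :
    (Fin n → AZ) × (Fin n → AS) → ℝ :=
  fun zs => ((m1 : ℝ) * (m2 : ℝ))⁻¹ * ∑ l1, ∑ l2,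
    ∏ i, PZ (c l i) (c1 l l1 i) (c2 l l2 i) (zs.2 i) (zs.1 i) * PS (zs.2 i)

/-- The ideal output-plus-state distribution `P^n_{ZS|U}(· | u)`. -/
def idealZS (PU1 : U → U1 → ℝ) (PU2 : U → U2 → ℝ) (PS : AS → ℝ)
    (PZ : U → U1 → U2 → AS → AZ → ℝ) {n : ℕ} (u : Fin n → U) :
    (Fin n → AZ) × (Fin n → AS) → ℝ :=
  fun zs => ∑ u1 : Fin n → U1, ∑ u2 : Fin n → U2,
    (∏ i, PU1 (u i) (u1 i)) * (∏ i, PU2 (u i) (u2 i)) *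
      ∏ i, PZ (u i) (u1 i) (u2 i) (zs.2 i) (zs.1 i) * PS (zs.2 i)

/-- The expectation `E[f(X)]` of a random variable `X` with mass function `p`, so that
`mean p fun a => mean (q a) fun b => f a b` averages over a pair drawn by first `p`, then `q`. -/
def mean {A : Type*} [Fintype A] (p f : A → ℝ) : ℝ := ∑ a, p a * f a

section Mean

variable {A B : Type*} [Fintype A] [Fintype B] {p : A → ℝ} {f g : A → ℝ}

theorem mean_congr_of_pos (hp : ∀ a, 0 ≤ p a) (h : ∀ a, 0 < p a → f a = g a) :
    mean p f = mean p g :=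
  Finset.sum_congr rfl fun a _ => by
    rcases (hp a).eq_or_lt with ha | ha
    · simp only [← ha, zero_mul]
    · rw [h a ha]

theorem mean_mono_of_pos (hp : ∀ a, 0 ≤ p a) (h : ∀ a, 0 < p a → f a ≤ g a) :
    mean p f ≤ mean p g :=
  Finset.sum_le_sum fun a _ => by
    rcases (hp a).eq_or_lt with ha | ha
    · simp only [← ha, zero_mul, le_refl]
    · exact mul_le_mul_of_nonneg_left (h a ha) ha.le

theorem mean_mono (hp : ∀ a, 0 ≤ p a) (h : ∀ a, f a ≤ g a) : mean p f ≤ mean p g :=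
  mean_mono_of_pos hp fun a _ => h a

theorem mean_nonneg_of_pos (hp : ∀ a, 0 ≤ p a) (hf : ∀ a, 0 < p a → 0 ≤ f a) : 0 ≤ mean p f :=
  Finset.sum_nonneg fun a _ => by
    rcases (hp a).eq_or_lt with ha | ha
    · simp only [← ha, zero_mul, le_refl]
    · exact mul_nonneg ha.le (hf a ha)

theorem mean_nonneg (hp : ∀ a, 0 ≤ p a) (hf : ∀ a, 0 ≤ f a) : 0 ≤ mean p f :=
  mean_nonneg_of_pos hp fun a _ => hf a

theorem mean_pos (hp : ∀ a, 0 ≤ p a) (hf : ∀ a, 0 ≤ f a) {a : A} (hpa : 0 < p a)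
    (hfa : 0 < f a) : 0 < mean p f :=
  Finset.sum_pos' (fun a _ => mul_nonneg (hp a) (hf a)) ⟨a, Finset.mem_univ a, mul_pos hpa hfa⟩

theorem exists_pos_of_mean_pos (hp : ∀ a, 0 ≤ p a) (h : 0 < mean p f) : ∃ a, 0 < p a ∧ 0 < f a := by
  by_contra! hf
  exact h.not_ge ((mean_mono_of_pos hp hf).trans_eq (by simp [mean]))

theorem mean_const (hp : IsPmf p) (x : ℝ) : (mean p fun _ => x) = x := by
  rw [mean, ← Finset.sum_mul, hp.2, one_mul]

theorem mean_add (p f g : A → ℝ) : (mean p fun a => f a + g a) = mean p f + mean p g := by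
  simp only [mean, mul_add, Finset.sum_add_distrib]

theorem mean_sub (p f g : A → ℝ) : (mean p fun a => f a - g a) = mean p f - mean p g := by
  simp only [mean, mul_sub, Finset.sum_sub_distrib]

theorem mean_const_mul (p : A → ℝ) (x : ℝ) (f : A → ℝ) :
    (mean p fun a => x * f a) = x * mean p f := by
  simp only [mean, mul_left_comm, Finset.mul_sum]

theorem mean_sum {ι : Type*} (s : Finset ι) (p : A → ℝ) (f : ι → A → ℝ) :
    (mean p fun a => ∑ i ∈ s, f i a) = ∑ i ∈ s, mean p (f i) := by
  simp only [mean, Finset.mul_sum]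
  exact Finset.sum_comm

theorem mean_comm (p : A → ℝ) (q : B → ℝ) (f : A → B → ℝ) :
    (mean p fun a => mean q fun b => f a b) = mean q fun b => mean p fun a => f a b := by
  simp only [mean, Finset.mul_sum, mul_left_comm]
  exact Finset.sum_comm

theorem hasDerivAt_mean_of_pos (hp : ∀ a, 0 ≤ p a) {f : A → ℝ → ℝ} {f' : A → ℝ}
    {x : ℝ} (hf : ∀ a, 0 < p a → HasDerivAt (f a) (f' a) x) :
    HasDerivAt (fun x => mean p fun a => f a x) (mean p f') x := by
  refine HasDerivAt.fun_sum fun a _ => ?_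
  rcases (hp a).eq_or_lt with ha | ha
  · simpa only [← ha, zero_mul] using hasDerivAt_const x 0
  · exact (hf a ha).const_mul _

end Mean

/-- The product of the mass functions `p i`: the law of a family of independent variables. -/
def piPmf {ι A : Type*} [Fintype ι] (p : ι → A → ℝ) (c : ι → A) : ℝ := ∏ i, p i (c i)

section Product

variable {ι A : Type*} [Fintype ι] [DecidableEq ι] [Fintype A] {p : ι → A → ℝ}

theorem mean_piPmf_prod (p f : ι → A → ℝ) :
    (mean (piPmf p) fun c => ∏ i, f i (c i)) = ∏ i, mean (p i) (f i) := by
  simp only [mean, piPmf, ← Finset.prod_mul_distrib]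
  rw [Finset.prod_univ_sum, Fintype.piFinset_univ]

theorem isPmf_piPmf (hp : ∀ i, IsPmf (p i)) : IsPmf (piPmf p) where
  left c := Finset.prod_nonneg fun i _ => (hp i).1 (c i)
  right := by
    simpa [mean, fun i => (hp i).2] using mean_piPmf_prod p fun _ _ => 1

omit [DecidableEq ι] in
theorem pos_of_piPmf_pos (hp : ∀ i, IsPmf (p i)) {c : ι → A} (hc : 0 < piPmf p c) (i : ι) :
    0 < p i (c i) :=
  ((hp i).1 (c i)).lt_of_ne' (Finset.prod_ne_zero_iff.1 hc.ne' i (Finset.mem_univ i))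

theorem mean_piPmf_split (p : ι → A → ℝ) (l : ι) (f : A → ({i // i ≠ l} → A) → ℝ) :
    (mean (piPmf p) fun c => f (c l) fun i => c i) =
      mean (p l) fun a => mean (piPmf fun i : {i // i ≠ l} => p i) (f a) := by
  simp only [mean, Finset.mul_sum]
  rw [← (Equiv.funSplitAt l A).symm.sum_comp, Fintype.sum_prod_type]
  refine Finset.sum_congr rfl fun a _ => Finset.sum_congr rfl fun c _ => ?_
  have hne (i : {i // i ≠ l}) : (Equiv.funSplitAt l A).symm (a, c) i = c i := by
    simp [Equiv.funSplitAt, Equiv.piSplitAt, i.2]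
  have heq : (Equiv.funSplitAt l A).symm (a, c) l = a := by
    simp [Equiv.funSplitAt, Equiv.piSplitAt]
  simp only [piPmf, Fintype.prod_eq_mul_prod_subtype_ne _ l, hne, heq, mul_assoc]

theorem mean_piPmf_eval (hp : ∀ i, IsPmf (p i)) (l : ι) (f : A → ℝ) :
    (mean (piPmf p) fun c => f (c l)) = mean (p l) f := by
  simp only [mean_piPmf_split p l fun a _ => f a, mean_const (isPmf_piPmf fun _ => hp _)]

theorem mean_piPmf_eval_pair (hp : ∀ i, IsPmf (p i)) {l j : ι} (hjl : j ≠ l) (f : A → A → ℝ) :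
    (mean (piPmf p) fun c => f (c l) (c j)) = mean (p l) fun a => mean (p j) (f a) := by
  rw [mean_piPmf_split p l fun a c => f a (c ⟨j, hjl⟩)]
  simp only [mean_piPmf_eval (p := fun i : {i // i ≠ l} => p i) (fun i => hp i) ⟨j, hjl⟩]

end Product

/-- The uniform distribution on a finite type. -/
def uniform (I : Type*) [Fintype I] : I → ℝ := fun _ => (Fintype.card I : ℝ)⁻¹

section Uniform

variable {I A : Type*} [Fintype I] [Fintype A] {p : A → ℝ}

theorem isPmf_uniform [Nonempty I] : IsPmf (uniform I) where
  left _ := by simp [uniform]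
  right := by simp [uniform]

theorem uniform_pos [Nonempty I] (i : I) : 0 < uniform I i :=
  inv_pos.2 (Nat.cast_pos.2 Fintype.card_pos)

theorem mean_uniform_ite [DecidableEq I] (l : I) (x : ℝ) :
    (mean (uniform I) fun i => if i = l then x else 0) = (Fintype.card I : ℝ)⁻¹ * x := by
  simp [mean, uniform]

/-- Only the diagonal pair `i = l` of codewords fails to be independent. -/
theorem mean_piPmf_uniform_le [DecidableEq I] [Nonempty I] (hp : IsPmf p) {f : A → A → ℝ}
    (hf : ∀ a b, 0 ≤ f a b) (l : I) :
    (mean (piPmf fun _ : I => p) fun c => mean (uniform I) fun i => f (c l) (c i)) ≤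
      mean p fun a => mean p (f a) + (Fintype.card I : ℝ)⁻¹ * f a a := by
  have pair_le (i : I) : (mean (piPmf fun _ : I => p) fun c => f (c l) (c i)) ≤
      (mean p fun a => mean p (f a)) + if i = l then mean p fun a => f a a else 0 := by
    split_ifs with h
    · rw [h, mean_piPmf_eval (fun _ => hp) l fun a => f a a]
      exact le_add_of_nonneg_left (mean_nonneg hp.1 fun a => mean_nonneg hp.1 (hf a))
    · rw [mean_piPmf_eval_pair (fun _ => hp) h f, add_zero]
  rw [mean_comm, mean_add, mean_const_mul]
  refine (mean_mono isPmf_uniform.1 pair_le).trans_eq ?_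
  rw [mean_add, mean_const isPmf_uniform, mean_uniform_ite]

end Uniform

section OneShot

variable {A B Y : Type*} [Fintype A] [Fintype B]

/-- The law of the output of the channel `W` when its two inputs are independent with mass
functions `pa` and `pb`. -/
def outputLaw (pa : A → ℝ) (pb : B → ℝ) (W : A → B → Y → ℝ) (y : Y) : ℝ :=
  mean pa fun a => mean pb fun b => W a b y

/-- The nonempty sets of satellite codewords. When the codewords with indices `(i, j)` are
compared with those with indices `(i', j')`, such a set records which indices agree. -/
inductive Satellites
  | first
  | second
  | both

namespace Satellites

instance : Fintype Satellites where
  elems := ⟨{first, second, both}, by simp⟩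
  complete := by rintro (_ | _ | _) <;> simp

theorem sum_univ (f : Satellites → ℝ) : ∑ s, f s = f first + f second + f both := by
  simp [Finset.sum, Finset.univ, Fintype.elems, add_assoc]

/-- The output law of `W` given the inputs in the set `s`, evaluated at the inputs `(a, b)`; the
remaining input is averaged out. -/
def condLaw (pa : A → ℝ) (pb : B → ℝ) (W : A → B → Y → ℝ) : Satellites → A → B → Y → ℝ
  | first, a, _, y => mean pb fun b => W a b y
  | second, _, b, y => mean pa fun a => W a b y
  | both, a, b, y => W a b y

/-- The likelihood ratio of the output given the inputs in the set `s`; its mean logarithm is the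
mutual information between these inputs and the output. -/
def ratio (pa : A → ℝ) (pb : B → ℝ) (W : A → B → Y → ℝ) (s : Satellites) (a : A)
    (b : B) (y : Y) : ℝ :=
  s.condLaw pa pb W a b y / outputLaw pa pb W y

/-- The number of ways to choose the codewords in the set `s` from codebooks of sizes `M`, `N`. -/
def size (M N : ℝ) : Satellites → ℝ
  | first => M
  | second => N
  | both => M * N

variable {pa : A → ℝ} {pb : B → ℝ} {W : A → B → Y → ℝ}

theorem size_nonneg {M N : ℝ} (hM : 0 ≤ M) (hN : 0 ≤ N) : ∀ s : Satellites, 0 ≤ s.size M N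
  | first => hM
  | second => hN
  | both => mul_nonneg hM hN

theorem condLaw_nonneg (hpa : ∀ a, 0 ≤ pa a) (hpb : ∀ b, 0 ≤ pb b) (hW : ∀ a b y, 0 ≤ W a b y) :
    ∀ (s : Satellites) (a : A) (b : B) (y : Y), 0 ≤ s.condLaw pa pb W a b y
  | first, a, _, y => mean_nonneg hpb fun b => hW a b y
  | second, _, b, y => mean_nonneg hpa fun a => hW a b y
  | both, a, b, y => hW a b y

theorem condLaw_pos (hpa : ∀ a, 0 ≤ pa a) (hpb : ∀ b, 0 ≤ pb b) (hW : ∀ a b y, 0 ≤ W a b y)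
    {a : A} {b : B} {y : Y} (ha : 0 < pa a) (hb : 0 < pb b) (hy : 0 < W a b y) :
    ∀ s : Satellites, 0 < s.condLaw pa pb W a b y
  | first => mean_pos hpb (fun b => hW a b y) hb hy
  | second => mean_pos hpa (fun a => hW a b y) ha hy
  | both => hy

end Satellites

variable {pa : A → ℝ} {pb : B → ℝ} {W : A → B → Y → ℝ}

theorem outputLaw_nonneg (hpa : ∀ a, 0 ≤ pa a) (hpb : ∀ b, 0 ≤ pb b)
    (hW : ∀ a b y, 0 ≤ W a b y) (y : Y) : 0 ≤ outputLaw pa pb W y :=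
  mean_nonneg hpa fun a => mean_nonneg hpb fun b => hW a b y

theorem outputLaw_pos (hpa : ∀ a, 0 ≤ pa a) (hpb : ∀ b, 0 ≤ pb b) (hW : ∀ a b y, 0 ≤ W a b y)
    {a : A} {b : B} {y : Y} (ha : 0 < pa a) (hb : 0 < pb b) (hy : 0 < W a b y) :
    0 < outputLaw pa pb W y :=
  mean_pos hpa (fun a => mean_nonneg hpb fun b => hW a b y) ha
    (mean_pos hpb (fun b => hW a b y) hb hy)

theorem mean_outputLaw [Fintype Y] (pa : A → ℝ) (pb : B → ℝ) (W : A → B → Y → ℝ) (f : Y → ℝ) :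
    mean (outputLaw pa pb W) f = mean pa fun a => mean pb fun b => mean (W a b) f := by
  simp only [outputLaw, mean, Finset.sum_mul, Finset.mul_sum, mul_assoc]
  rw [Finset.sum_comm]
  exact Finset.sum_congr rfl fun a _ => Finset.sum_comm

theorem isPmf_outputLaw [Fintype Y] (hpa : IsPmf pa) (hpb : IsPmf pb)
    (hW : ∀ a b, IsPmf (W a b)) : IsPmf (outputLaw pa pb W) where
  left := outputLaw_nonneg hpa.1 hpb.1 fun a b => (hW a b).1
  right := by
    calc ∑ y, outputLaw pa pb W y = mean (outputLaw pa pb W) fun _ => 1 := by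
          simp only [mean, mul_one]
      _ = 1 := by
          rw [mean_outputLaw]
          simp only [mean_const (hW _ _), mean_const hpb, mean_const hpa]

theorem Satellites.ratio_nonneg (hpa : ∀ a, 0 ≤ pa a) (hpb : ∀ b, 0 ≤ pb b)
    (hW : ∀ a b y, 0 ≤ W a b y) (s : Satellites) (a : A) (b : B) (y : Y) :
    0 ≤ s.ratio pa pb W a b y :=
  div_nonneg (s.condLaw_nonneg hpa hpb hW a b y) (outputLaw_nonneg hpa hpb hW y)

theorem Satellites.ratio_pos (hpa : ∀ a, 0 ≤ pa a) (hpb : ∀ b, 0 ≤ pb b)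
    (hW : ∀ a b y, 0 ≤ W a b y) {a : A} {b : B} {y : Y} (ha : 0 < pa a) (hb : 0 < pb b)
    (hy : 0 < W a b y) (s : Satellites) : 0 < s.ratio pa pb W a b y :=
  div_pos (s.condLaw_pos hpa hpb hW ha hb hy) (outputLaw_pos hpa hpb hW ha hb hy)

/-- `1` plus the likelihood ratios of all sets of satellites, each divided by the size of the set.
It bounds the mean of the ratio of the induced to the ideal output law when the transmitted
codewords are `a` and `b`. -/
def ratioBound (pa : A → ℝ) (pb : B → ℝ) (W : A → B → Y → ℝ) (M N : ℝ) (a : A)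
    (b : B) (y : Y) : ℝ :=
  1 + ∑ s : Satellites, (s.size M N)⁻¹ * s.ratio pa pb W a b y

theorem one_le_ratioBound (hpa : ∀ a, 0 ≤ pa a) (hpb : ∀ b, 0 ≤ pb b)
    (hW : ∀ a b y, 0 ≤ W a b y) {M N : ℝ} (hM : 0 ≤ M) (hN : 0 ≤ N) (a : A) (b : B) (y : Y) :
    1 ≤ ratioBound pa pb W M N a b y :=
  le_add_of_nonneg_right <| Finset.sum_nonneg fun s _ =>
    mul_nonneg (inv_nonneg.2 (s.size_nonneg hM hN)) (s.ratio_nonneg hpa hpb hW a b y)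

theorem outputLaw_mul_ratioBound {y : Y} (hy : outputLaw pa pb W y ≠ 0) (M N : ℝ) (a : A) (b : B) :
    outputLaw pa pb W y * ratioBound pa pb W M N a b y =
      outputLaw pa pb W y + ∑ s : Satellites, (s.size M N)⁻¹ * s.condLaw pa pb W a b y := by
  simp only [ratioBound, Satellites.ratio, mul_add, mul_one, Finset.mul_sum]
  congr! 2 with s
  field_simp

section CodebookLaw

variable {I J A B Y : Type*} [Fintype I] [Fintype J]

/-- The output law induced by a pair of codebooks `c`, `d`: the inputs are codewords with
independent, uniformly distributed indices. -/
def codebookLaw (W : A → B → Y → ℝ) (c : I → A) (d : J → B) : Y → ℝ :=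
  outputLaw (uniform I) (uniform J) fun i j => W (c i) (d j)

theorem codebookLaw_pos {W : A → B → Y → ℝ} (hW : ∀ a b y, 0 ≤ W a b y) {c : I → A} {d : J → B}
    {i : I} {j : J} {y : Y} (hy : 0 < W (c i) (d j) y) : 0 < codebookLaw W c d y := by
  have : Nonempty I := ⟨i⟩
  have : Nonempty J := ⟨j⟩
  exact outputLaw_pos isPmf_uniform.1 isPmf_uniform.1 (fun i j => hW (c i) (d j))
    (uniform_pos i) (uniform_pos j) hy

end CodebookLaw

section Codebooks

variable {I J : Type*} [Fintype I] [Fintype J] [DecidableEq I] [DecidableEq J]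

theorem mean_mul_codebookLaw_le [Nonempty I] [Nonempty J] (hpa : IsPmf pa) (hpb : IsPmf pb)
    (hW : ∀ a b y, 0 ≤ W a b y) (k : I) (l : J) (y : Y) {h : A → B → ℝ} (hh : ∀ a b, 0 ≤ h a b) :
    (mean (piPmf fun _ : I => pa) fun c => mean (piPmf fun _ : J => pb) fun d =>
        h (c k) (d l) * codebookLaw W c d y) ≤
      mean pa fun a => mean pb fun b => h a b * (outputLaw pa pb W y +
        ∑ s : Satellites, (s.size (Fintype.card I) (Fintype.card J))⁻¹ *
          s.condLaw pa pb W a b y) := by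
  let G (a a' : A) : ℝ := mean pb fun b =>
    mean pb (fun b' => h a b * W a' b' y) + (Fintype.card J : ℝ)⁻¹ * (h a b * W a' b y)
  have hhW (a b a' b') : 0 ≤ h a b * W a' b' y := mul_nonneg (hh a b) (hW a' b' y)
  have hG (a a') : 0 ≤ G a a' := mean_nonneg hpb.1 fun b =>
    add_nonneg (mean_nonneg hpb.1 (hhW a b a')) (mul_nonneg (by positivity) (hhW a b a' b))
  calc (mean (piPmf fun _ : I => pa) fun c => mean (piPmf fun _ : J => pb) fun d =>
        h (c k) (d l) * codebookLaw W c d y)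
      = mean (piPmf fun _ : I => pa) fun c => mean (uniform I) fun i =>
          mean (piPmf fun _ : J => pb) fun d => mean (uniform J) fun j =>
            h (c k) (d l) * W (c i) (d j) y := by
        simp only [codebookLaw, outputLaw, ← mean_const_mul,
          mean_comm (piPmf fun _ : J => pb) (uniform I)]
    _ ≤ mean (piPmf fun _ : I => pa) fun c => mean (uniform I) fun i => G (c k) (c i) :=
        mean_mono (isPmf_piPmf fun _ => hpa).1 fun c => mean_mono isPmf_uniform.1 fun i =>
          mean_piPmf_uniform_le hpb (fun b b' => hhW (c k) b (c i) b') l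
    _ ≤ mean pa fun a => mean pa (G a) + (Fintype.card I : ℝ)⁻¹ * G a a :=
        mean_piPmf_uniform_le hpa hG k
    _ = _ := by
        congr 1 with a
        simp only [G, mean_comm pa pb, ← mean_const_mul, ← mean_add]
        congr 1 with b
        simp only [mean_add, mean_const_mul, Satellites.sum_univ, Satellites.condLaw,
          Satellites.size, outputLaw, mul_inv]
        ring

theorem mean_codebookLaw_div_le_one [Fintype Y] [Nonempty I] [Nonempty J] (hpa : IsPmf pa)
    (hpb : IsPmf pb) (hW : ∀ a b, IsPmf (W a b)) (k : I) (l : J) :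
    (mean (piPmf fun _ : I => pa) fun c => mean (piPmf fun _ : J => pb) fun d =>
        mean (W (c k) (d l)) fun y => codebookLaw W c d y / outputLaw pa pb W y /
          ratioBound pa pb W (Fintype.card I) (Fintype.card J) (c k) (d l) y) ≤ 1 := by
  set Q := outputLaw pa pb W with hQ
  set t := ratioBound pa pb W (Fintype.card I) (Fintype.card J) with ht
  have hW0 (a b y) : 0 ≤ W a b y := (hW a b).1 y
  have hQ0 (y) : 0 ≤ Q y := outputLaw_nonneg hpa.1 hpb.1 hW0 y
  have ht1 (a b y) : 1 ≤ t a b y :=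
    one_le_ratioBound hpa.1 hpb.1 hW0 (Nat.cast_nonneg _) (Nat.cast_nonneg _) a b y
  have hh (y a b) : 0 ≤ W a b y / (Q y * t a b y) :=
    div_nonneg (hW0 a b y) (mul_nonneg (hQ0 y) (zero_le_one.trans (ht1 a b y)))
  calc (mean (piPmf fun _ : I => pa) fun c => mean (piPmf fun _ : J => pb) fun d =>
        mean (W (c k) (d l)) fun y => codebookLaw W c d y / Q y / t (c k) (d l) y)
      = ∑ y, mean (piPmf fun _ : I => pa) fun c => mean (piPmf fun _ : J => pb) fun d =>
          W (c k) (d l) y / (Q y * t (c k) (d l) y) * codebookLaw W c d y := by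
        simp only [← mean_sum]
        congr! 4 with c d
        exact Finset.sum_congr rfl fun y _ => by
          beta_reduce
          rw [div_div, mul_div_left_comm, mul_comm]
    _ ≤ ∑ y, mean pa fun a => mean pb fun b => W a b y := by
        refine Finset.sum_le_sum fun y _ =>
          (mean_mul_codebookLaw_le hpa hpb hW0 k l y (hh y)).trans ?_
        refine mean_mono hpa.1 fun a => mean_mono hpb.1 fun b => ?_
        rcases eq_or_ne (Q y) 0 with h0 | h0
        · simpa only [h0, zero_mul, div_zero] using hW0 a b y
        · rw [← outputLaw_mul_ratioBound h0, ← hQ, ← ht,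
            div_mul_cancel₀ _ (mul_ne_zero h0 (zero_lt_one.trans_le (ht1 a b y)).ne')]
    _ = 1 := (isPmf_outputLaw hpa hpb hW).2

/-- Jensen's inequality for the logarithm, from its tangent line at `ratioBound`. -/
theorem mean_log_codebookLaw_le [Fintype Y] [Nonempty I] [Nonempty J] (hpa : IsPmf pa)
    (hpb : IsPmf pb) (hW : ∀ a b, IsPmf (W a b)) (k : I) (l : J) :
    (mean (piPmf fun _ : I => pa) fun c => mean (piPmf fun _ : J => pb) fun d =>
        mean (W (c k) (d l)) fun y => Real.log (codebookLaw W c d y / outputLaw pa pb W y)) ≤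
      mean pa fun a => mean pb fun b => mean (W a b) fun y =>
        Real.log (ratioBound pa pb W (Fintype.card I) (Fintype.card J) a b y) := by
  set Q := outputLaw pa pb W
  set t := ratioBound pa pb W (Fintype.card I) (Fintype.card J)
  have hW0 (a b y) : 0 ≤ W a b y := (hW a b).1 y
  have hc := isPmf_piPmf fun _ : I => hpa
  have hd := isPmf_piPmf fun _ : J => hpb
  calc _ ≤ mean (piPmf fun _ : I => pa) fun c => mean (piPmf fun _ : J => pb) fun d =>
        mean (W (c k) (d l)) fun y =>
          Real.log (t (c k) (d l) y) + (codebookLaw W c d y / Q y / t (c k) (d l) y - 1) := by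
        refine mean_mono_of_pos hc.1 fun c hpc => mean_mono_of_pos hd.1 fun d hpd =>
          mean_mono_of_pos (hW _ _).1 fun y hy => ?_
        have ht : 0 < t (c k) (d l) y := zero_lt_one.trans_le <|
          one_le_ratioBound hpa.1 hpb.1 hW0 (Nat.cast_nonneg _) (Nat.cast_nonneg _) _ _ y
        have hQ : 0 < Q y := outputLaw_pos hpa.1 hpb.1 hW0
          (pos_of_piPmf_pos (fun _ => hpa) hpc k) (pos_of_piPmf_pos (fun _ => hpb) hpd l) hy
        have hx := div_pos (codebookLaw_pos hW0 hy) hQ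
        rw [← sub_le_iff_le_add', ← Real.log_div hx.ne' ht.ne']
        exact Real.log_le_sub_one_of_pos (div_pos hx ht)
    _ = (mean pa fun a => mean pb fun b => mean (W a b) fun y => Real.log (t a b y)) +
          ((mean (piPmf fun _ : I => pa) fun c => mean (piPmf fun _ : J => pb) fun d =>
            mean (W (c k) (d l)) fun y => codebookLaw W c d y / Q y / t (c k) (d l) y) - 1) := by
        simp only [mean_add, mean_sub, mean_const (hW _ _), mean_const hc, mean_const hd]
        congr 1
        rw [← mean_piPmf_eval (fun _ : I => hpa) k]
        congr! with c
        exact mean_piPmf_eval (fun _ : J => hpb) l fun b =>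
          mean (W (c k) b) fun y => Real.log (t (c k) b y)
    _ ≤ _ := by
        linarith [mean_codebookLaw_div_le_one (I := I) (J := J) hpa hpb hW k l]

end Codebooks

section Divergence

variable {Y : Type*} [Fintype Y] {p q : Y → ℝ}

theorem KL_eq_mean_log (p q : Y → ℝ) :
    KL p q = (Real.log 2)⁻¹ * mean p fun y => Real.log (p y / q y) := by
  simp only [KL, mean, Real.logb, Finset.mul_sum]
  exact Finset.sum_congr rfl fun y _ => by ring

theorem KL_nonneg (hp : IsPmf p) (hq : IsPmf q) (hpq : ∀ y, 0 < p y → 0 < q y) : 0 ≤ KL p q := by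
  have hmean : mean p (fun y => q y / p y) ≤ 1 := by
    refine (Finset.sum_le_sum fun y _ => ?_).trans_eq hq.2
    rcases eq_or_ne (p y) 0 with h0 | h0
    · rw [h0, zero_mul]
      exact hq.1 y
    · rw [mul_div_cancel₀ _ h0]
  rw [KL_eq_mean_log]
  refine mul_nonneg (inv_nonneg.2 (Real.log_nonneg one_le_two)) ?_
  calc 0 ≤ 1 - mean p (fun y => q y / p y) := sub_nonneg.2 hmean
    _ = mean p fun y => 1 - q y / p y := by rw [mean_sub, mean_const hp]
    _ ≤ mean p fun y => Real.log (p y / q y) := mean_mono_of_pos hp.1 fun y hy => by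
        simpa only [inv_div] using Real.one_sub_inv_le_log_of_pos (div_pos hy (hpq y hy))

end Divergence

theorem log_one_add_sum_le {ι : Type*} (s : Finset ι) {x : ι → ℝ} (hx : ∀ i, 0 ≤ x i) {α : ℝ}
    (hα : 0 < α) (hα1 : α ≤ 1) : Real.log (1 + ∑ i ∈ s, x i) ≤ α⁻¹ * ∑ i ∈ s, x i ^ α := by
  have hsum : 0 ≤ ∑ i ∈ s, x i := Finset.sum_nonneg fun i _ => hx i
  have subadditive : (1 + ∑ i ∈ s, x i) ^ α ≤ 1 + ∑ i ∈ s, x i ^ α := by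
    refine (Real.rpow_add_le_add_rpow zero_le_one hsum hα.le hα1).trans ?_
    rw [Real.one_rpow]
    gcongr
    exact Finset.le_sum_of_subadditive_on_pred (· ^ α) (0 ≤ ·) (Real.zero_rpow hα.ne').le
      (fun a b ha hb => Real.rpow_add_le_add_rpow ha hb hα.le hα1) (fun _ _ => add_nonneg) x
      fun i _ => hx i
  rw [le_inv_mul_iff₀ hα, ← Real.log_rpow (by positivity)]
  exact (Real.log_le_sub_one_of_pos (by positivity)).trans (by linarith)

/-- The moment of order `α` of the likelihood ratio of the satellites `s`, over inputs with mass
functions `pa`, `pb` and the corresponding output. -/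
def Satellites.ratioMoment [Fintype Y] (pa : A → ℝ) (pb : B → ℝ) (W : A → B → Y → ℝ) (α : ℝ)
    (s : Satellites) : ℝ :=
  mean pa fun a => mean pb fun b => mean (W a b) fun y => s.ratio pa pb W a b y ^ α

theorem mean_log_ratioBound_le [Fintype Y] (hpa : IsPmf pa) (hpb : IsPmf pb)
    (hW : ∀ a b, IsPmf (W a b)) {M N : ℝ} (hM : 0 ≤ M) (hN : 0 ≤ N) {α : ℝ} (hα : 0 < α)
    (hα1 : α ≤ 1) :
    (mean pa fun a => mean pb fun b => mean (W a b) fun y =>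
        Real.log (ratioBound pa pb W M N a b y)) ≤
      α⁻¹ * ∑ s : Satellites, (s.size M N)⁻¹ ^ α * s.ratioMoment pa pb W α := by
  have hW0 (a b y) : 0 ≤ W a b y := (hW a b).1 y
  simp only [Satellites.ratioMoment, ← mean_const_mul, ← mean_sum]
  refine mean_mono hpa.1 fun a => mean_mono hpb.1 fun b => mean_mono (hW a b).1 fun y => ?_
  have size_nonneg (s : Satellites) : 0 ≤ (s.size M N)⁻¹ := inv_nonneg.2 (s.size_nonneg hM hN)
  have ratio_nonneg (s : Satellites) := s.ratio_nonneg hpa.1 hpb.1 hW0 a b y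
  refine (log_one_add_sum_le _ (fun s => mul_nonneg (size_nonneg s) (ratio_nonneg s)) hα
    hα1).trans_eq ?_
  simp only [Real.mul_rpow (size_nonneg _) (ratio_nonneg _)]

section Codebooks

variable {I J : Type*} [Fintype I] [Fintype J] [DecidableEq I] [DecidableEq J] [Fintype Y]

/-- The expected divergence of the induced from the ideal output law of the channel `W`, for
codebooks indexed by `I` and `J` with independent codewords drawn from `pa` and `pb`. -/
def meanKL (I J : Type*) [Fintype I] [Fintype J] [DecidableEq I] [DecidableEq J]
    (pa : A → ℝ) (pb : B → ℝ) (W : A → B → Y → ℝ) : ℝ :=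
  mean (piPmf fun _ : I => pa) fun c => mean (piPmf fun _ : J => pb) fun d =>
    KL (codebookLaw W c d) (outputLaw pa pb W)

theorem meanKL_nonneg [Nonempty I] [Nonempty J] (hpa : IsPmf pa) (hpb : IsPmf pb)
    (hW : ∀ a b, IsPmf (W a b)) : 0 ≤ meanKL I J pa pb W := by
  have hW0 (a b y) : 0 ≤ W a b y := (hW a b).1 y
  refine mean_nonneg_of_pos (isPmf_piPmf fun _ => hpa).1 fun c hc =>
    mean_nonneg_of_pos (isPmf_piPmf fun _ => hpb).1 fun d hd =>
      KL_nonneg (isPmf_outputLaw isPmf_uniform isPmf_uniform fun i j => hW (c i) (d j))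
        (isPmf_outputLaw hpa hpb hW) fun y => ?_
  intro hy
  obtain ⟨i, -, hi⟩ := exists_pos_of_mean_pos isPmf_uniform.1 hy
  obtain ⟨j, -, hij⟩ := exists_pos_of_mean_pos isPmf_uniform.1 hi
  exact outputLaw_pos hpa.1 hpb.1 hW0 (pos_of_piPmf_pos (fun _ => hpa) hc i)
    (pos_of_piPmf_pos (fun _ => hpb) hd j) hij

theorem meanKL_le [Nonempty I] [Nonempty J] (hpa : IsPmf pa) (hpb : IsPmf pb)
    (hW : ∀ a b, IsPmf (W a b)) {α : ℝ} (hα : 0 < α) (hα1 : α ≤ 1) :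
    meanKL I J pa pb W ≤ (α * Real.log 2)⁻¹ * ∑ s : Satellites,
      (s.size (Fintype.card I) (Fintype.card J))⁻¹ ^ α * s.ratioMoment pa pb W α := by
  calc meanKL I J pa pb W
      = (Real.log 2)⁻¹ * mean (uniform I) fun i => mean (uniform J) fun j =>
          mean (piPmf fun _ : I => pa) fun c => mean (piPmf fun _ : J => pb) fun d =>
            mean (W (c i) (d j)) fun y =>
              Real.log (codebookLaw W c d y / outputLaw pa pb W y) := by
        have mean_codebookLaw (c : I → A) (d : J → B) (f : Y → ℝ) := mean_outputLaw (uniform I)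
          (uniform J) (fun i j => W (c i) (d j)) f
        simp only [meanKL, KL_eq_mean_log, mean_const_mul, codebookLaw, mean_codebookLaw,
          mean_comm (piPmf fun _ : I => pa) (uniform _),
          mean_comm (piPmf fun _ : J => pb) (uniform _)]
    _ ≤ (Real.log 2)⁻¹ * mean (uniform I) fun _ => mean (uniform J) fun _ =>
          α⁻¹ * ∑ s : Satellites,
            (s.size (Fintype.card I) (Fintype.card J))⁻¹ ^ α * s.ratioMoment pa pb W α := by
        gcongr
        exact mean_mono isPmf_uniform.1 fun i => mean_mono isPmf_uniform.1 fun j =>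
          (mean_log_codebookLaw_le hpa hpb hW i j).trans <|
            mean_log_ratioBound_le hpa hpb hW (Nat.cast_nonneg _) (Nat.cast_nonneg _) hα hα1
    _ = _ := by rw [mean_const isPmf_uniform, mean_const isPmf_uniform, mul_inv_rev, mul_assoc]

end Codebooks

end OneShot

section Memoryless

variable {ι A B Y : Type*} [Fintype ι] [DecidableEq ι] [Fintype A] [Fintype B]

/-- The memoryless channel that acts on the `i`-th letters of its inputs as `W i`. -/
def piChannel {ι A B Y : Type*} [Fintype ι] (W : ι → A → B → Y → ℝ) (a : ι → A) (b : ι → B) :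
    (ι → Y) → ℝ :=
  piPmf fun i => W i (a i) (b i)

theorem outputLaw_piPmf (pa : ι → A → ℝ) (pb : ι → B → ℝ) (W : ι → A → B → Y → ℝ) (y : ι → Y) :
    outputLaw (piPmf pa) (piPmf pb) (piChannel W) y =
      ∏ i, outputLaw (pa i) (pb i) (W i) (y i) := by
  simp only [outputLaw, ← mean_piPmf_prod]
  rfl

theorem Satellites.condLaw_piPmf (pa : ι → A → ℝ) (pb : ι → B → ℝ) (W : ι → A → B → Y → ℝ)
    (s : Satellites) (a : ι → A) (b : ι → B) (y : ι → Y) :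
    s.condLaw (piPmf pa) (piPmf pb) (piChannel W) a b y =
      ∏ i, s.condLaw (pa i) (pb i) (W i) (a i) (b i) (y i) := by
  cases s <;> simp only [condLaw, ← mean_piPmf_prod] <;> rfl

theorem Satellites.ratioMoment_piPmf [Fintype Y] {pa : ι → A → ℝ} {pb : ι → B → ℝ}
    {W : ι → A → B → Y → ℝ} (hpa : ∀ i a, 0 ≤ pa i a) (hpb : ∀ i b, 0 ≤ pb i b)
    (hW : ∀ i a b y, 0 ≤ W i a b y) (α : ℝ) (s : Satellites) :
    s.ratioMoment (piPmf pa) (piPmf pb) (piChannel W) α =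
      ∏ i, s.ratioMoment (pa i) (pb i) (W i) α := by
  have ratio_rpow (a : ι → A) (b : ι → B) (y : ι → Y) :
      s.ratio (piPmf pa) (piPmf pb) (piChannel W) a b y ^ α =
        ∏ i, s.ratio (pa i) (pb i) (W i) (a i) (b i) (y i) ^ α := by
    rw [Real.finsetProd_rpow _ _ fun i _ => s.ratio_nonneg (hpa i) (hpb i) (hW i) _ _ _]
    simp only [ratio, condLaw_piPmf, outputLaw_piPmf, Finset.prod_div_distrib]
  simp only [ratioMoment, ratio_rpow, piChannel]
  simp only [← mean_piPmf_prod]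

end Memoryless

theorem eventually_lt_of_hasDerivAt_neg {f : ℝ → ℝ} {f' x : ℝ} (hf : HasDerivAt f f' x)
    (hf' : f' < 0) : ∀ᶠ y in nhdsWithin x (Set.Ioi x), f y < f x := by
  have slope_neg : ∀ᶠ y in nhdsWithin x (Set.Ioi x), slope f x y < 0 :=
    ((hasDerivAt_iff_tendsto_slope.1 hf).eventually (gt_mem_nhds hf')).filter_mono
      (nhdsWithin_mono _ fun y hy => ne_of_gt hy)
  filter_upwards [slope_neg, self_mem_nhdsWithin] with y hy hxy
  rwa [slope_def_field, div_lt_iff₀ (sub_pos.2 hxy), zero_mul, sub_neg] at hy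

section Superposition

variable {V A B Y : Type*} [Fintype V] [Fintype A] [Fintype B] [Fintype Y]

/-- `ratioMoment` averaged over the cloud letter, which selects the input laws and the channel. -/
def Satellites.cloudMoment (pv : V → ℝ) (pa : V → A → ℝ) (pb : V → B → ℝ)
    (W : V → A → B → Y → ℝ) (α : ℝ) (s : Satellites) : ℝ :=
  mean pv fun v => s.ratioMoment (pa v) (pb v) (W v) α

/-- The conditional mutual information, given the cloud letter, between the satellite letters in
`s` and the output. -/
def Satellites.info (pv : V → ℝ) (pa : V → A → ℝ) (pb : V → B → ℝ)
    (W : V → A → B → Y → ℝ) (s : Satellites) : ℝ :=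
  mean pv fun v => mean (pa v) fun a => mean (pb v) fun b => mean (W v a b) fun y =>
    Real.logb 2 (s.ratio (pa v) (pb v) (W v) a b y)

/-- The total rate of the satellite codebooks in `s`. -/
def Satellites.rate (R₁ R₂ : ℝ) : Satellites → ℝ
  | first => R₁
  | second => R₂
  | both => R₁ + R₂

/-- The expected divergence at a cloud center drawn from `pv`, with satellite codebooks indexed by
`I` and `J`, over the blocklength `ι`. -/
def cloudDivergence (ι I J : Type*) [Fintype ι] [DecidableEq ι] [Fintype I] [Fintype J]
    [DecidableEq I] [DecidableEq J] (pv : V → ℝ) (pa : V → A → ℝ) (pb : V → B → ℝ)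
    (W : V → A → B → Y → ℝ) : ℝ :=
  mean (piPmf fun _ : ι => pv) fun v =>
    meanKL I J (piPmf fun i => pa (v i)) (piPmf fun i => pb (v i)) (piChannel fun i => W (v i))

variable {ι I J : Type*} [Fintype ι] [DecidableEq ι] [Fintype I] [Fintype J] [DecidableEq I]
  [DecidableEq J]
variable {pv : V → ℝ} {pa : V → A → ℝ} {pb : V → B → ℝ} {W : V → A → B → Y → ℝ}

theorem cloudDivergence_nonneg [Nonempty I] [Nonempty J] (hpv : IsPmf pv) (hpa : IsKernel pa)
    (hpb : IsKernel pb) (hW : ∀ v a b, IsPmf (W v a b)) :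
    0 ≤ cloudDivergence ι I J pv pa pb W :=
  mean_nonneg (isPmf_piPmf fun _ => hpv).1 fun v =>
    meanKL_nonneg (isPmf_piPmf fun i => hpa (v i)) (isPmf_piPmf fun i => hpb (v i)) fun a b =>
      isPmf_piPmf fun i => hW (v i) (a i) (b i)

theorem cloudDivergence_le [Nonempty I] [Nonempty J] (hpv : IsPmf pv) (hpa : IsKernel pa)
    (hpb : IsKernel pb) (hW : ∀ v a b, IsPmf (W v a b)) {α : ℝ} (hα : 0 < α) (hα1 : α ≤ 1) :
    cloudDivergence ι I J pv pa pb W ≤ (α * Real.log 2)⁻¹ * ∑ s : Satellites,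
      (s.size (Fintype.card I) (Fintype.card J))⁻¹ ^ α *
        s.cloudMoment pv pa pb W α ^ Fintype.card ι := by
  have moment_pow (s : Satellites) : s.cloudMoment pv pa pb W α ^ Fintype.card ι =
      mean (piPmf fun _ : ι => pv) fun v => s.ratioMoment (piPmf fun i => pa (v i))
        (piPmf fun i => pb (v i)) (piChannel fun i => W (v i)) α := by
    simp only [s.ratioMoment_piPmf (fun _ => (hpa _).1) (fun _ => (hpb _).1)
      (fun _ a b => (hW _ a b).1), mean_piPmf_prod _ fun _ v => s.ratioMoment (pa v) (pb v) (W v) α]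
    exact (Finset.prod_const _).symm
  simp only [moment_pow, ← mean_const_mul, ← mean_sum]
  exact mean_mono (isPmf_piPmf fun _ => hpv).1 fun v =>
    meanKL_le (isPmf_piPmf fun i => hpa (v i)) (isPmf_piPmf fun i => hpb (v i))
      (fun a b => isPmf_piPmf fun i => hW (v i) (a i) (b i)) hα hα1

theorem Satellites.hasDerivAt_cloudMoment (hpv : IsPmf pv) (hpa : IsKernel pa) (hpb : IsKernel pb)
    (hW : ∀ v a b, IsPmf (W v a b)) (s : Satellites) :
    HasDerivAt (fun α => s.cloudMoment pv pa pb W α)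
      (Real.log 2 * s.info pv pa pb W) 0 := by
  simp only [info, ← mean_const_mul]
  refine hasDerivAt_mean_of_pos hpv.1 fun v _ => hasDerivAt_mean_of_pos (hpa v).1 fun a ha =>
    hasDerivAt_mean_of_pos (hpb v).1 fun b hb => hasDerivAt_mean_of_pos (hW v a b).1 fun y hy => ?_
  have hr := s.ratio_pos (hpa v).1 (hpb v).1 (fun a b => (hW v a b).1) ha hb hy
  rw [Real.logb, mul_div_cancel₀ _ (Real.log_pos one_lt_two).ne']
  simpa only [Real.rpow_zero, one_mul] using (Real.hasStrictDerivAt_const_rpow hr 0).hasDerivAt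

theorem Satellites.eventually_cloudMoment_lt_one (hpv : IsPmf pv) (hpa : IsKernel pa)
    (hpb : IsKernel pb) (hW : ∀ v a b, IsPmf (W v a b)) (s : Satellites) {R : ℝ}
    (hR : s.info pv pa pb W < R) : ∀ᶠ α in nhdsWithin (0 : ℝ) (Set.Ioi 0),
      (2 : ℝ) ^ (-(α * R)) * s.cloudMoment pv pa pb W α < 1 := by
  have at_zero : s.cloudMoment pv pa pb W 0 = 1 := by
    simp only [cloudMoment, ratioMoment, Real.rpow_zero, mean_const (hW _ _ _), mean_const (hpb _),
      mean_const (hpa _), mean_const hpv]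
  have hpow : HasDerivAt (fun α : ℝ => (2 : ℝ) ^ (-(α * R))) (Real.log 2 * -R) 0 := by
    simpa using ((hasDerivAt_id (0 : ℝ)).mul_const R).neg.const_rpow two_pos
  have hderiv := hpow.mul (s.hasDerivAt_cloudMoment hpv hpa hpb hW)
  have neg : Real.log 2 * (s.info pv pa pb W - R) < 0 :=
    mul_neg_of_pos_of_neg (Real.log_pos one_lt_two) (sub_neg.2 hR)
  simpa [at_zero] using eventually_lt_of_hasDerivAt_neg hderiv (by simp [at_zero]; linarith)

theorem Satellites.two_rpow_rate_le_size {R₁ R₂ x M N : ℝ} (hM : (2 : ℝ) ^ (x * R₁) ≤ M)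
    (hN : (2 : ℝ) ^ (x * R₂) ≤ N) : ∀ s : Satellites, (2 : ℝ) ^ (x * s.rate R₁ R₂) ≤ s.size M N
  | first => hM
  | second => hN
  | both => by
    rw [rate, mul_add, Real.rpow_add two_pos]
    exact mul_le_mul hM hN (by positivity) ((by positivity : (0 : ℝ) ≤ _).trans hM)

theorem Satellites.inv_size_rpow_le {R₁ R₂ M N : ℝ} {n : ℕ} (hM : (2 : ℝ) ^ ((n : ℝ) * R₁) ≤ M)
    (hN : (2 : ℝ) ^ ((n : ℝ) * R₂) ≤ N) {α : ℝ} (hα : 0 ≤ α) (s : Satellites) :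
    (s.size M N)⁻¹ ^ α ≤ ((2 : ℝ) ^ (-(α * s.rate R₁ R₂))) ^ n := by
  have hs := two_rpow_rate_le_size hM hN s
  calc (s.size M N)⁻¹ ^ α ≤ ((2 : ℝ) ^ (n * s.rate R₁ R₂))⁻¹ ^ α := by
        have : 0 ≤ s.size M N := (by positivity : (0 : ℝ) ≤ _).trans hs
        gcongr
    _ = ((2 : ℝ) ^ (-(α * s.rate R₁ R₂))) ^ n := by
        rw [← Real.rpow_neg two_pos.le, ← Real.rpow_mul two_pos.le, ← Real.rpow_natCast,
          ← Real.rpow_mul two_pos.le]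
        congr 1
        ring

theorem Satellites.cloudMoment_nonneg (hpv : IsPmf pv) (hpa : IsKernel pa) (hpb : IsKernel pb)
    (hW : ∀ v a b, IsPmf (W v a b)) (α : ℝ) (s : Satellites) :
    0 ≤ s.cloudMoment pv pa pb W α :=
  mean_nonneg hpv.1 fun v => mean_nonneg (hpa v).1 fun a => mean_nonneg (hpb v).1 fun b =>
    mean_nonneg (hW v a b).1 fun y => Real.rpow_nonneg
      (s.ratio_nonneg (hpa v).1 (hpb v).1 (fun a b => (hW v a b).1) a b y) α

theorem Satellites.exists_cloudMoment_le (hpv : IsPmf pv) (hpa : IsKernel pa) (hpb : IsKernel pb)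
    (hW : ∀ v a b, IsPmf (W v a b)) {R₁ R₂ : ℝ}
    (hinfo : ∀ s : Satellites, s.info pv pa pb W < s.rate R₁ R₂) :
    ∃ α : ℝ, 0 < α ∧ α ≤ 1 ∧ ∃ ρ : ℝ, 0 < ρ ∧ ρ < 1 ∧ ∀ s : Satellites,
      (2 : ℝ) ^ (-(α * s.rate R₁ R₂)) * s.cloudMoment pv pa pb W α ≤ ρ := by
  have ev_lt : ∀ᶠ α in nhdsWithin (0 : ℝ) (Set.Ioi 0), ∀ s : Satellites,
      (2 : ℝ) ^ (-(α * s.rate R₁ R₂)) * s.cloudMoment pv pa pb W α < 1 :=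
    Filter.eventually_all.2 fun s => s.eventually_cloudMoment_lt_one hpv hpa hpb hW (hinfo s)
  obtain ⟨α, hlt, hα, hα1⟩ := (ev_lt.and (Ioc_mem_nhdsGT one_pos)).exists
  refine ⟨α, hα, hα1, ?_⟩
  have : Nonempty Satellites := ⟨first⟩
  obtain ⟨t, ht⟩ := Finite.exists_max fun s : Satellites =>
    (2 : ℝ) ^ (-(α * s.rate R₁ R₂)) * s.cloudMoment pv pa pb W α
  obtain ⟨ρ, htρ, hρ1⟩ := exists_between (hlt t)
  have ht0 := mul_nonneg (Real.rpow_nonneg two_pos.le (-(α * t.rate R₁ R₂)))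
    (t.cloudMoment_nonneg hpv hpa hpb hW α)
  exact ⟨ρ, ht0.trans_lt htρ, hρ1, fun s => (ht s).trans htρ.le⟩

theorem neZero_of_two_rpow_le {x : ℝ} {m : ℕ} (h : (2 : ℝ) ^ x ≤ m) : NeZero m :=
  ⟨Nat.cast_ne_zero (R := ℝ).1 ((Real.rpow_pos_of_pos two_pos x).trans_le h).ne'⟩

theorem exists_cloudDivergence_le_exp (hpv : IsPmf pv) (hpa : IsKernel pa) (hpb : IsKernel pb)
    (hW : ∀ v a b, IsPmf (W v a b)) {R₁ R₂ : ℝ}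
    (hinfo : ∀ s : Satellites, s.info pv pa pb W < s.rate R₁ R₂) :
    ∃ C γ : ℝ, 0 < C ∧ 0 < γ ∧ ∀ (n m₁ m₂ : ℕ), (2 : ℝ) ^ ((n : ℝ) * R₁) ≤ m₁ →
      (2 : ℝ) ^ ((n : ℝ) * R₂) ≤ m₂ →
        cloudDivergence (Fin n) (Fin m₁) (Fin m₂) pv pa pb W ≤ C * Real.exp (-γ * n) := by
  obtain ⟨α, hα, hα1, ρ, hρ, hρ1, hle⟩ := Satellites.exists_cloudMoment_le hpv hpa hpb hW hinfo
  refine ⟨(α * Real.log 2)⁻¹ * Fintype.card Satellites, -Real.log ρ, ?_,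
    neg_pos.2 (Real.log_neg hρ hρ1), fun n m₁ m₂ h₁ h₂ => ?_⟩
  · have : Nonempty Satellites := ⟨.first⟩
    positivity
  have := neZero_of_two_rpow_le h₁
  have := neZero_of_two_rpow_le h₂
  have term_le (s : Satellites) :
      (s.size m₁ m₂)⁻¹ ^ α * s.cloudMoment pv pa pb W α ^ n ≤ ρ ^ n := by
    have hm := s.cloudMoment_nonneg hpv hpa hpb hW α
    calc (s.size m₁ m₂)⁻¹ ^ α * s.cloudMoment pv pa pb W α ^ n
        ≤ ((2 : ℝ) ^ (-(α * s.rate R₁ R₂))) ^ n * s.cloudMoment pv pa pb W α ^ n := by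
          gcongr
          exact s.inv_size_rpow_le h₁ h₂ hα.le
      _ = ((2 : ℝ) ^ (-(α * s.rate R₁ R₂)) * s.cloudMoment pv pa pb W α) ^ n := (mul_pow _ _ _).symm
      _ ≤ ρ ^ n := by
          gcongr
          exact hle s
  calc cloudDivergence (Fin n) (Fin m₁) (Fin m₂) pv pa pb W
      ≤ (α * Real.log 2)⁻¹ * ∑ s : Satellites,
          (s.size m₁ m₂)⁻¹ ^ α * s.cloudMoment pv pa pb W α ^ n := by
        simpa only [Fintype.card_fin] using
          cloudDivergence_le (ι := Fin n) (I := Fin m₁) (J := Fin m₂) hpv hpa hpb hW hα hα1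
    _ ≤ (α * Real.log 2)⁻¹ * ∑ _s : Satellites, ρ ^ n := by
        gcongr with s
        exact term_le s
    _ = _ := by
        rw [Finset.sum_const, Finset.card_univ, nsmul_eq_mul, neg_neg, mul_comm (Real.log ρ),
          Real.exp_nat_mul, Real.exp_log hρ, mul_assoc]

end Superposition

section MutualInformation

variable {Ω α β γ : Type*} [Fintype Ω] {p : Ω → ℝ}

theorem law_apply_pos [DecidableEq α] (hp : ∀ ω, 0 ≤ p ω) (X : Ω → α) {ω : Ω} (hω : 0 < p ω) :
    0 < law p X (X ω) :=
  Finset.sum_pos' (fun ω' _ => ite_nonneg (hp ω') le_rfl)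
    ⟨ω, Finset.mem_univ ω, by rwa [if_pos rfl]⟩

theorem H_eq_neg_mean [Fintype α] [DecidableEq α] (p : Ω → ℝ) (X : Ω → α) :
    H p X = -mean p fun ω => Real.logb 2 (law p X (X ω)) := by
  simp only [H, ent]
  conv_lhs => enter [1, 2, a, 1]; rw [law]
  simp only [Finset.sum_mul, ite_mul, zero_mul]
  rw [Finset.sum_comm]
  simp only [Finset.sum_ite_eq, Finset.mem_univ, if_true, mean]

variable [Fintype α] [Fintype β] [Fintype γ] [DecidableEq α] [DecidableEq β] [DecidableEq γ]
  {X : Ω → α} {Y : Ω → β} {Z : Ω → γ}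

/-- Conditional mutual information from a factorization of the laws defining it, where `σ` is the
law of `Z`, `x` that of `X` given `Z`, and `v * w`, `v * q` are the laws of `Y` and `Z` with and
without conditioning on `X`. -/
theorem cMI_eq_mean_logb (hp : ∀ ω, 0 ≤ p ω) (σ x v w q : Ω → ℝ)
    (hZ : ∀ ω, law p Z (Z ω) = σ ω)
    (hXZ : ∀ ω, law p (fun ω => (X ω, Z ω)) (X ω, Z ω) = x ω * σ ω)
    (hYZ : ∀ ω, law p (fun ω => (Y ω, Z ω)) (Y ω, Z ω) = v ω * q ω)
    (hXYZ : ∀ ω, law p (fun ω => (X ω, (Y ω, Z ω))) (X ω, (Y ω, Z ω)) = x ω * (v ω * w ω)) :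
    cMI p X Y Z = mean p fun ω => Real.logb 2 (w ω / q ω) := by
  have logb_ratio : (mean p fun ω => Real.logb 2 (w ω / q ω)) = mean p fun ω =>
      Real.logb 2 (x ω * (v ω * w ω)) + Real.logb 2 (σ ω) -
        Real.logb 2 (x ω * σ ω) - Real.logb 2 (v ω * q ω) := by
    refine mean_congr_of_pos hp fun ω hω => ?_
    have hxσ := (hXZ ω ▸ law_apply_pos hp (fun ω => (X ω, Z ω)) hω).ne'
    have hvq := (hYZ ω ▸ law_apply_pos hp (fun ω => (Y ω, Z ω)) hω).ne'
    have hxvw := (hXYZ ω ▸ law_apply_pos hp (fun ω => (X ω, (Y ω, Z ω))) hω).ne'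
    obtain ⟨hx, hσ⟩ := mul_ne_zero_iff.1 hxσ
    obtain ⟨hv, hq⟩ := mul_ne_zero_iff.1 hvq
    have hvw := right_ne_zero_of_mul hxvw
    have hw := right_ne_zero_of_mul hvw
    rw [Real.logb_mul hx hσ, Real.logb_mul hx hvw, Real.logb_mul hv hw, Real.logb_mul hv hq,
      Real.logb_div hw hq]
    ring
  rw [logb_ratio]
  simp only [cMI, Hc, H_eq_neg_mean, hZ, hXZ, hYZ, hXYZ, mean_sub, mean_add]
  ring

end MutualInformation

section SingleLetter

/-- The channel `P_{ZS|U U1 U2}` from the letters `(u, a, b)` to the output and the state. -/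
def outputStateChannel {V A B S Z : Type*} (PS : S → ℝ) (PZ : V → A → B → S → Z → ℝ) (v : V)
    (a : A) (b : B) (y : Z × S) : ℝ :=
  PZ v a b y.2 y.1 * PS y.2

theorem isPmf_outputStateChannel {V A B S Z : Type*} [Fintype S] [Fintype Z] {PS : S → ℝ}
    {PZ : V → A → B → S → Z → ℝ} (hPS : IsPmf PS) (hPZ : ∀ v a b s, IsPmf (PZ v a b s)) (v : V)
    (a : A) (b : B) : IsPmf (outputStateChannel PS PZ v a b) where
  left y := mul_nonneg ((hPZ v a b y.2).1 y.1) (hPS.1 y.2)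
  right := by
    rw [Fintype.sum_prod_type_right]
    simp only [outputStateChannel, ← Finset.sum_mul, (hPZ _ _ _ _).2, one_mul, hPS.2]

variable {V A B S Z : Type} [Fintype V] [Fintype A] [Fintype B] [Fintype S] [Fintype Z]
  {PU : V → ℝ} {PU1 : V → A → ℝ} {PU2 : V → B → ℝ} {PS : S → ℝ}
  {PZ : V → A → B → S → Z → ℝ}

theorem slJointZ_nonneg (hPU : IsPmf PU) (hPU1 : IsKernel PU1) (hPU2 : IsKernel PU2)
    (hPS : IsPmf PS) (hPZ : ∀ u u1 u2 s, IsPmf (PZ u u1 u2 s)) (ω : O5Z V A B S Z) :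
    0 ≤ slJointZ PU PU1 PU2 PS PZ ω :=
  mul_nonneg (mul_nonneg (mul_nonneg (mul_nonneg (hPS.1 _) (hPU.1 _)) ((hPU1 _).1 _))
    ((hPU2 _).1 _)) ((hPZ _ _ _ _).1 _)

theorem mean_slJointZ (PU : V → ℝ) (PU1 : V → A → ℝ) (PU2 : V → B → ℝ) (PS : S → ℝ)
    (PZ : V → A → B → S → Z → ℝ) (f : V → A → B → Z × S → ℝ) :
    (mean (slJointZ PU PU1 PU2 PS PZ) fun ω => f ω.u ω.u1 ω.u2 (ω.z, ω.s)) =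
      mean PU fun u => mean (PU1 u) fun a => mean (PU2 u) fun b =>
        mean (outputStateChannel PS PZ u a b) (f u a b) := by
  simp only [mean, slJointZ, outputStateChannel, Fintype.sum_prod_type, O5Z.u, O5Z.u1, O5Z.u2,
    O5Z.s, O5Z.z, Finset.mul_sum]
  refine Finset.sum_congr rfl fun u _ => Finset.sum_congr rfl fun a _ =>
    Finset.sum_congr rfl fun b _ => ?_
  rw [Finset.sum_comm]
  exact Finset.sum_congr rfl fun z _ => Finset.sum_congr rfl fun s _ => by ring

variable [DecidableEq V] [DecidableEq S]

theorem law_slJointZ_su (hPU1 : IsKernel PU1) (hPU2 : IsKernel PU2)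
    (hPZ : ∀ u u1 u2 s, IsPmf (PZ u u1 u2 s)) (ω : O5Z V A B S Z) :
    law (slJointZ PU PU1 PU2 PS PZ) (fun ω => (ω.s, ω.u)) (ω.s, ω.u) = PS ω.s * PU ω.u := by
  obtain ⟨u, a, b, s, z⟩ := ω
  simp only [law, slJointZ, Fintype.sum_prod_type, O5Z.u, O5Z.u1, O5Z.u2, O5Z.s, O5Z.z,
    Prod.mk.injEq, ite_and, Finset.sum_ite_irrel, Finset.sum_const_zero, Finset.sum_ite_eq',
    Finset.mem_univ, if_true, ← Finset.mul_sum, (hPZ _ _ _ _).2, (hPU2 _).2, (hPU1 _).2, mul_one]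

variable [DecidableEq Z]

theorem law_slJointZ_zsu (ω : O5Z V A B S Z) :
    law (slJointZ PU PU1 PU2 PS PZ) (fun ω => (ω.z, (ω.s, ω.u))) (ω.z, (ω.s, ω.u))
      = PU ω.u * outputLaw (PU1 ω.u) (PU2 ω.u) (outputStateChannel PS PZ ω.u) (ω.z, ω.s) := by
  obtain ⟨u, a, b, s, z⟩ := ω
  simp only [law, slJointZ, Fintype.sum_prod_type, O5Z.u, O5Z.u1, O5Z.u2, O5Z.s, O5Z.z,
    Prod.mk.injEq, ite_and, Finset.sum_ite_irrel, Finset.sum_const_zero, Finset.sum_ite_eq',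
    Finset.mem_univ, if_true, outputLaw, mean, outputStateChannel, Finset.mul_sum]
  exact Finset.sum_congr rfl fun _ _ => Finset.sum_congr rfl fun _ _ => by ring

theorem cMI_slJointZ_eq_info (hPU : IsPmf PU) (hPU1 : IsKernel PU1) (hPU2 : IsKernel PU2)
    (hPS : IsPmf PS) (hPZ : ∀ u u1 u2 s, IsPmf (PZ u u1 u2 s)) {α : Type*} [Fintype α]
    [DecidableEq α] (X : O5Z V A B S Z → α) (t : Satellites) (x : O5Z V A B S Z → ℝ)
    (hXZ : ∀ ω, law (slJointZ PU PU1 PU2 PS PZ) (fun ω => (X ω, (ω.s, ω.u))) (X ω, (ω.s, ω.u)) =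
      x ω * (PS ω.s * PU ω.u))
    (hXYZ : ∀ ω, law (slJointZ PU PU1 PU2 PS PZ) (fun ω => (X ω, (ω.z, (ω.s, ω.u))))
      (X ω, (ω.z, (ω.s, ω.u))) = x ω * (PU ω.u *
        t.condLaw (PU1 ω.u) (PU2 ω.u) (outputStateChannel PS PZ ω.u) ω.u1 ω.u2 (ω.z, ω.s))) :
    cMI (slJointZ PU PU1 PU2 PS PZ) X (fun ω => ω.z) (fun ω => (ω.s, ω.u)) =
      t.info PU PU1 PU2 (outputStateChannel PS PZ) := by
  rw [cMI_eq_mean_logb (slJointZ_nonneg hPU hPU1 hPU2 hPS hPZ) _ x _ _ _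
    (law_slJointZ_su hPU1 hPU2 hPZ) hXZ law_slJointZ_zsu hXYZ]
  exact mean_slJointZ PU PU1 PU2 PS PZ fun u a b y =>
    Real.logb 2 (t.ratio (PU1 u) (PU2 u) (outputStateChannel PS PZ u) a b y)

theorem cMI_slJointZ_u1 [DecidableEq A] (hPU : IsPmf PU) (hPU1 : IsKernel PU1) (hPU2 : IsKernel PU2)
    (hPS : IsPmf PS) (hPZ : ∀ u u1 u2 s, IsPmf (PZ u u1 u2 s)) :
    cMI (slJointZ PU PU1 PU2 PS PZ) (fun ω => ω.u1) (fun ω => ω.z) (fun ω => (ω.s, ω.u)) =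
      Satellites.first.info PU PU1 PU2 (outputStateChannel PS PZ) := by
  refine cMI_slJointZ_eq_info hPU hPU1 hPU2 hPS hPZ _ .first (fun ω => PU1 ω.u ω.u1) ?_ ?_ <;>
    rintro ⟨u, a, b, s, z⟩ <;>
    simp only [law, slJointZ, Fintype.sum_prod_type, O5Z.u, O5Z.u1, O5Z.u2, O5Z.s, O5Z.z,
      Prod.mk.injEq, ite_and, Finset.sum_ite_irrel, Finset.sum_const_zero, Finset.sum_ite_eq',
      Finset.mem_univ, if_true]
  · simp only [← Finset.mul_sum, (hPZ _ _ _ _).2, (hPU2 _).2, mul_one]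
    ring
  · simp only [Satellites.condLaw, mean, outputStateChannel, Finset.mul_sum]
    exact Finset.sum_congr rfl fun _ _ => by ring

theorem cMI_slJointZ_u2 [DecidableEq B] (hPU : IsPmf PU) (hPU1 : IsKernel PU1) (hPU2 : IsKernel PU2)
    (hPS : IsPmf PS) (hPZ : ∀ u u1 u2 s, IsPmf (PZ u u1 u2 s)) :
    cMI (slJointZ PU PU1 PU2 PS PZ) (fun ω => ω.u2) (fun ω => ω.z) (fun ω => (ω.s, ω.u)) =
      Satellites.second.info PU PU1 PU2 (outputStateChannel PS PZ) := by
  refine cMI_slJointZ_eq_info hPU hPU1 hPU2 hPS hPZ _ .second (fun ω => PU2 ω.u ω.u2) ?_ ?_ <;>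
    rintro ⟨u, a, b, s, z⟩ <;>
    simp only [law, slJointZ, Fintype.sum_prod_type, O5Z.u, O5Z.u1, O5Z.u2, O5Z.s, O5Z.z,
      Prod.mk.injEq, ite_and, Finset.sum_ite_irrel, Finset.sum_const_zero, Finset.sum_ite_eq',
      Finset.mem_univ, if_true]
  · simp only [← Finset.mul_sum, ← Finset.sum_mul, (hPZ _ _ _ _).2, (hPU1 _).2, mul_one]
    ring
  · simp only [Satellites.condLaw, mean, outputStateChannel, Finset.mul_sum]
    exact Finset.sum_congr rfl fun _ _ => by ring

theorem cMI_slJointZ_u1u2 [DecidableEq A] [DecidableEq B] (hPU : IsPmf PU)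
    (hPU1 : IsKernel PU1) (hPU2 : IsKernel PU2) (hPS : IsPmf PS)
    (hPZ : ∀ u u1 u2 s, IsPmf (PZ u u1 u2 s)) :
    cMI (slJointZ PU PU1 PU2 PS PZ) (fun ω => (ω.u1, ω.u2)) (fun ω => ω.z)
        (fun ω => (ω.s, ω.u)) =
      Satellites.both.info PU PU1 PU2 (outputStateChannel PS PZ) := by
  refine cMI_slJointZ_eq_info hPU hPU1 hPU2 hPS hPZ _ .both
    (fun ω => PU1 ω.u ω.u1 * PU2 ω.u ω.u2) ?_ ?_ <;>
    rintro ⟨u, a, b, s, z⟩ <;>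
    simp only [law, slJointZ, Fintype.sum_prod_type, O5Z.u, O5Z.u1, O5Z.u2, O5Z.s, O5Z.z,
      Prod.mk.injEq, ite_and, Finset.sum_ite_irrel, Finset.sum_const_zero, Finset.sum_ite_eq',
      Finset.mem_univ, if_true]
  · simp only [← Finset.mul_sum, (hPZ _ _ _ _).2, mul_one]
    ring
  · simp only [Satellites.condLaw, outputStateChannel]
    ring

end SingleLetter

section SuperpositionCodebooks

theorem KL_comp_equiv {Y Y' : Type*} [Fintype Y] [Fintype Y'] (e : Y' ≃ Y) (p q : Y → ℝ) :
    KL (p ∘ e) (q ∘ e) = KL p q :=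
  e.sum_comp fun y => p y * Real.logb 2 (p y / q y)

variable {V A B S Z : Type} {PS : S → ℝ} {PZ : V → A → B → S → Z → ℝ}
  {m₀ m₁ m₂ n : ℕ}

theorem inducedZS_eq_codebookLaw (c : Fin m₀ → Fin n → V) (c₁ : Fin m₀ → Fin m₁ → Fin n → A)
    (c₂ : Fin m₀ → Fin m₂ → Fin n → B) (l : Fin m₀) :
    inducedZS PS PZ c c₁ c₂ l =
      codebookLaw (piChannel fun i => outputStateChannel PS PZ (c l i)) (c₁ l) (c₂ l) ∘
        (Equiv.arrowProdEquivProdArrow (Fin n) (fun _ => Z) fun _ => S).symm := by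
  funext zs
  simp only [Function.comp_apply, inducedZS, codebookLaw, outputLaw, mean, uniform,
    Fintype.card_fin, ← Finset.mul_sum, mul_inv, mul_assoc]
  rfl

variable [Fintype A] [Fintype B]

theorem idealZS_eq_outputLaw (PU1 : V → A → ℝ) (PU2 : V → B → ℝ) (u : Fin n → V) :
    idealZS PU1 PU2 PS PZ u =
      outputLaw (piPmf fun i => PU1 (u i)) (piPmf fun i => PU2 (u i))
          (piChannel fun i => outputStateChannel PS PZ (u i)) ∘
        (Equiv.arrowProdEquivProdArrow (Fin n) (fun _ => Z) fun _ => S).symm := by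
  funext zs
  simp only [Function.comp_apply, idealZS, outputLaw, mean, Finset.mul_sum, mul_assoc]
  rfl

variable [Fintype V] [Fintype S] [Fintype Z]

theorem sum_cbProb_mul (PU : V → ℝ) (PU1 : V → A → ℝ) (PU2 : V → B → ℝ)
    (F : (Fin m₀ → Fin n → V) → (Fin m₀ → Fin m₁ → Fin n → A) → (Fin m₀ → Fin m₂ → Fin n → B) → ℝ) :
    ∑ c, ∑ c₁, ∑ c₂, cbProb PU PU1 PU2 c c₁ c₂ * F c c₁ c₂ =
      mean (piPmf fun _ => piPmf fun _ => PU) fun c =>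
        mean (piPmf fun l => piPmf fun _ => piPmf fun i => PU1 (c l i)) fun c₁ =>
          mean (piPmf fun l => piPmf fun _ => piPmf fun i => PU2 (c l i)) fun c₂ => F c c₁ c₂ := by
  simp only [mean, Finset.mul_sum, ← mul_assoc]
  rfl

theorem mean_superposition_eval {PU : V → ℝ} {PU1 : V → A → ℝ} {PU2 : V → B → ℝ} (hPU : IsPmf PU)
    (hPU1 : IsKernel PU1) (hPU2 : IsKernel PU2) (l : Fin m₀)
    (F : (Fin n → V) → (Fin m₁ → Fin n → A) → (Fin m₂ → Fin n → B) → ℝ) :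
    (mean (piPmf fun _ : Fin m₀ => piPmf fun _ => PU) fun c =>
        mean (piPmf fun l => piPmf fun _ => piPmf fun i => PU1 (c l i)) fun c₁ =>
          mean (piPmf fun l => piPmf fun _ => piPmf fun i => PU2 (c l i)) fun c₂ =>
            F (c l) (c₁ l) (c₂ l)) =
      mean (piPmf fun _ => PU) fun v =>
        mean (piPmf fun _ => piPmf fun i => PU1 (v i)) fun d₁ =>
          mean (piPmf fun _ => piPmf fun i => PU2 (v i)) fun d₂ => F v d₁ d₂ := by
  have eval₁ (c : Fin m₀ → Fin n → V) := mean_piPmf_eval (A := Fin m₁ → Fin n → A)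
    (fun l => isPmf_piPmf fun _ => isPmf_piPmf fun i => hPU1 (c l i)) l
  have eval₂ (c : Fin m₀ → Fin n → V) := mean_piPmf_eval (A := Fin m₂ → Fin n → B)
    (fun l => isPmf_piPmf fun _ => isPmf_piPmf fun i => hPU2 (c l i)) l
  rw [← mean_piPmf_eval (fun _ : Fin m₀ => isPmf_piPmf fun _ => hPU) l]
  congr 1 with c
  rw [← eval₁]
  congr 1 with c₁
  rw [← eval₂]

theorem sum_cbProb_mul_KL {PU : V → ℝ} {PU1 : V → A → ℝ} {PU2 : V → B → ℝ} (hPU : IsPmf PU)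
    (hPU1 : IsKernel PU1) (hPU2 : IsKernel PU2) {P : Fin m₀ → ℝ} (hP : IsPmf P) :
    ∑ c : Fin m₀ → Fin n → V, ∑ c₁ : Fin m₀ → Fin m₁ → Fin n → A,
        ∑ c₂ : Fin m₀ → Fin m₂ → Fin n → B, cbProb PU PU1 PU2 c c₁ c₂ *
          ∑ l, P l * KL (inducedZS PS PZ c c₁ c₂ l) (idealZS PU1 PU2 PS PZ (c l)) =
      cloudDivergence (Fin n) (Fin m₁) (Fin m₂) PU PU1 PU2 (outputStateChannel PS PZ) := by
  simp only [sum_cbProb_mul, ← mean.eq_1 P, mean_comm _ P]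
  simp only [inducedZS_eq_codebookLaw, idealZS_eq_outputLaw, KL_comp_equiv]
  exact (congrArg (mean P) <| funext fun l => mean_superposition_eval hPU hPU1 hPU2 l
    fun v d₁ d₂ => KL (codebookLaw (piChannel fun i => outputStateChannel PS PZ (v i)) d₁ d₂)
      (outputLaw (piPmf fun i => PU1 (v i)) (piPmf fun i => PU2 (v i))
        (piChannel fun i => outputStateChannel PS PZ (v i)))).trans (mean_const hP _)

variable [DecidableEq V] [DecidableEq A] [DecidableEq B] [DecidableEq S] [DecidableEq Z]

theorem resolvability_superposition_general {PU : V → ℝ} {PU1 : V → A → ℝ} {PU2 : V → B → ℝ}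
    (hPU : IsPmf PU) (hPU1 : IsKernel PU1) (hPU2 : IsKernel PU2) (hPS : IsPmf PS)
    (hPZ : ∀ u u1 u2 s, IsPmf (PZ u u1 u2 s)) {R1 R2 : ℝ}
    (h1 : cMI (slJointZ PU PU1 PU2 PS PZ) (fun ω => ω.u1) (fun ω => ω.z)
        (fun ω => (ω.s, ω.u)) < R1)
    (h2 : cMI (slJointZ PU PU1 PU2 PS PZ) (fun ω => ω.u2) (fun ω => ω.z)
        (fun ω => (ω.s, ω.u)) < R2)
    (h12 : cMI (slJointZ PU PU1 PU2 PS PZ) (fun ω => (ω.u1, ω.u2)) (fun ω => ω.z)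
        (fun ω => (ω.s, ω.u)) < R1 + R2) :
    ∃ C γ : ℝ, 0 < C ∧ 0 < γ ∧ ∀ n m₀ m₁ m₂ : ℕ, (2 : ℝ) ^ ((n : ℝ) * R1) ≤ m₁ →
      (2 : ℝ) ^ ((n : ℝ) * R2) ≤ m₂ → ∀ P : Fin m₀ → ℝ, IsPmf P →
        |∑ c : Fin m₀ → Fin n → V, ∑ c1 : Fin m₀ → Fin m₁ → Fin n → A,
          ∑ c2 : Fin m₀ → Fin m₂ → Fin n → B, cbProb PU PU1 PU2 c c1 c2 *
            ∑ l, P l * KL (inducedZS PS PZ c c1 c2 l) (idealZS PU1 PU2 PS PZ (c l))| ≤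
          C * Real.exp (-γ * (n : ℝ)) := by
  have hW := isPmf_outputStateChannel hPS hPZ
  have hinfo : ∀ s : Satellites,
      s.info PU PU1 PU2 (outputStateChannel PS PZ) < s.rate R1 R2
    | .first => cMI_slJointZ_u1 hPU hPU1 hPU2 hPS hPZ ▸ h1
    | .second => cMI_slJointZ_u2 hPU hPU1 hPU2 hPS hPZ ▸ h2
    | .both => cMI_slJointZ_u1u2 hPU hPU1 hPU2 hPS hPZ ▸ h12
  obtain ⟨C, γ, hC, hγ, hle⟩ := exists_cloudDivergence_le_exp hPU hPU1 hPU2 hW hinfo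
  refine ⟨C, γ, hC, hγ, fun n m₀ m₁ m₂ hm₁ hm₂ P hP => ?_⟩
  have := neZero_of_two_rpow_le hm₁
  have := neZero_of_two_rpow_le hm₂
  rw [sum_cbProb_mul_KL hPU hPU1 hPU2 hP,
    abs_of_nonneg (cloudDivergence_nonneg hPU hPU1 hPU2 hW)]
  exact hle n m₁ m₂ hm₁ hm₂

end SuperpositionCodebooks

/-- **Lemma 1 (channel resolvability for superposition random codebooks).**
If `R1 > I(U1;Z|S,U)`, `R2 > I(U2;Z|S,U)` and `R1 + R2 > I(U1,U2;Z|S,U)`, then for every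
family of pmfs `Pbar n` on the cloud indices, the expected weighted KL divergence between
the induced and the ideal output distributions vanishes exponentially fast in `n`. -/
theorem resolvability_superposition (PU : U → ℝ) (PU1 : U → U1 → ℝ) (PU2 : U → U2 → ℝ)
    (PS : AS → ℝ) (PZ : U → U1 → U2 → AS → AZ → ℝ)
    (hPU : IsPmf PU) (hPU1 : IsKernel PU1) (hPU2 : IsKernel PU2) (hPS : IsPmf PS)
    (hPZ : ∀ u u1 u2 s, IsPmf (PZ u u1 u2 s))
    (R0 R1 R2 : ℝ) (hR0 : 0 < R0) (hR1 : 0 < R1) (hR2 : 0 < R2)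
    (h1 : cMI (slJointZ PU PU1 PU2 PS PZ) (fun ω => ω.u1) (fun ω => ω.z)
        (fun ω => (ω.s, ω.u)) < R1)
    (h2 : cMI (slJointZ PU PU1 PU2 PS PZ) (fun ω => ω.u2) (fun ω => ω.z)
        (fun ω => (ω.s, ω.u)) < R2)
    (h12 : cMI (slJointZ PU PU1 PU2 PS PZ) (fun ω => (ω.u1, ω.u2)) (fun ω => ω.z)
        (fun ω => (ω.s, ω.u)) < R1 + R2)
    (Pbar : (n : ℕ) → Fin ⌈(2 : ℝ) ^ ((n : ℝ) * R0)⌉₊ → ℝ)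
    (hPbar : ∀ n, IsPmf (Pbar n)) :
    ∃ C γ : ℝ, 0 < C ∧ 0 < γ ∧ ∀ n : ℕ,
      |∑ c : Fin ⌈(2 : ℝ) ^ ((n : ℝ) * R0)⌉₊ → Fin n → U,
        ∑ c1 : Fin ⌈(2 : ℝ) ^ ((n : ℝ) * R0)⌉₊ → Fin ⌈(2 : ℝ) ^ ((n : ℝ) * R1)⌉₊ → Fin n → U1,
        ∑ c2 : Fin ⌈(2 : ℝ) ^ ((n : ℝ) * R0)⌉₊ → Fin ⌈(2 : ℝ) ^ ((n : ℝ) * R2)⌉₊ → Fin n → U2,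
          cbProb PU PU1 PU2 c c1 c2 *
            ∑ l, Pbar n l *
              KL (inducedZS PS PZ c c1 c2 l) (idealZS PU1 PU2 PS PZ (c l))| ≤
        C * Real.exp (-γ * (n : ℝ)) := by
  obtain ⟨C, γ, hC, hγ, hle⟩ :=
    resolvability_superposition_general hPU hPU1 hPU2 hPS hPZ h1 h2 h12
  exact ⟨C, γ, hC, hγ, fun n => hle n _ _ _ (Nat.le_ceil _) (Nat.le_ceil _) (Pbar n) (hPbar n)⟩

end Paper
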